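/- Let u_ε be least energy solutions of the nearly critical Hartree equation and define λ_ε by λ_ε^{2(n−2)/(4−(n−2)ε)} = ‖u_ε‖_{L^∞(Ω)}. Then λ_ε → ∞ as ε → 0; that is, the least energy solutions become unbounded. -/

import Mathlib

open MeasureTheory Real Filter Topology Metric Bornology RealInnerProductSpace

noncomputable section

abbrev Eu (n : ℕ) := EuclideanSpace ℝ (Fin n)

/-- The Laplacian of a function `f : ℝⁿ → ℝ`. -/
noncomputable def lapl {n : ℕ} (f : Eu n → ℝ) (x : Eu n) : ℝ :=
  ∑ i : Fin n, fderiv ℝ (fun y => fderiv ℝ f y (EuclideanSpace.single i 1)) x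
    (EuclideanSpace.single i 1)

/-- Convolution with the kernel `|x|^(-k)`, integrating over the set `S`. -/
noncomputable def rzk {n : ℕ} (S : Set (Eu n)) (k : ℝ) (f : Eu n → ℝ) (x : Eu n) : ℝ :=
  ∫ z in S, f z / ‖x - z‖ ^ k

/-- Convolution with the Riesz kernel `|x|^(-(n-2))` over `S`. -/
noncomputable def rz {n : ℕ} (S : Set (Eu n)) (f : Eu n → ℝ) (x : Eu n) : ℝ :=
  rzk S ((n : ℝ) - 2) f x

/-- The critical exponent `p = (n+2)/(n-2)`. -/
noncomputable def pcrit (n : ℕ) : ℝ := ((n : ℝ) + 2) / ((n : ℝ) - 2)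

/-- `u` is a positive solution of the nearly critical Hartree equation
`-Δu = (|x|^{-(n-2)} ∗ u^{p-ε}) u^{p-1-ε}` in `Ω`, `u > 0` in `Ω`, `u = 0` on `∂Ω`
(extended by zero outside `Ω`). -/
def IsSol {n : ℕ} (Ω : Set (Eu n)) (ε : ℝ) (u : Eu n → ℝ) : Prop :=
  ContDiffOn ℝ 2 u Ω ∧ ContinuousOn u (closure Ω) ∧
  (∀ x ∈ Ω, - lapl u x =
      rz Ω (fun z => u z ^ (pcrit n - ε)) x * u x ^ (pcrit n - 1 - ε)) ∧
  (∀ x ∈ Ω, 0 < u x) ∧ (∀ x ∈ Ωᶜ, u x = 0)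

/-- The Hartree Rayleigh quotient with exponent `q`. -/
noncomputable def enRatio {n : ℕ} (Ω : Set (Eu n)) (q : ℝ) (u : Eu n → ℝ) : ℝ :=
  (∫ x in Ω, ‖gradient u x‖ ^ 2) /
    (∫ x in Ω, rz Ω (fun z => |u z| ^ q) x * |u x| ^ q) ^ (1 / q)

/-- The best constant in the Hardy–Littlewood–Sobolev–Sobolev inequality
`C_HLS (∫∫ |u|^p |u|^p / |x-z|^{n-2})^{1/p} ≤ ∫ |∇u|²`. -/
noncomputable def CHLS (n : ℕ) : ℝ :=
  sInf { c : ℝ | ∃ u : Eu n → ℝ, ContDiff ℝ (⊤ : ℕ∞) u ∧ HasCompactSupport u ∧ u ≠ 0 ∧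
    c = (∫ x, ‖gradient u x‖ ^ 2) /
      (∫ x, rz Set.univ (fun z => |u z| ^ pcrit n) x * |u x| ^ pcrit n) ^ (1 / pcrit n) }

/-- The sup norm of `u` over the closure of `Ω`. -/
noncomputable def supN {n : ℕ} (Ω : Set (Eu n)) (u : Eu n → ℝ) : ℝ :=
  sSup ((fun x => |u x|) '' closure Ω)

/-- The area of the unit sphere in `ℝⁿ`. -/
noncomputable def ωn (n : ℕ) : ℝ := 2 * π ^ ((n : ℝ) / 2) / Real.Gamma ((n : ℝ) / 2)

/-- A family of least energy solutions of the nearly critical Hartree equation. -/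
def LeastEnergyFamily {n : ℕ} (Ω : Set (Eu n)) (ε₀ : ℝ) (u : ℝ → Eu n → ℝ) : Prop :=
  (∀ ε ∈ Set.Ioo (0:ℝ) ε₀, IsSol Ω ε (u ε)) ∧
  Tendsto (fun ε => enRatio Ω (pcrit n - ε) (u ε)) (𝓝[>] (0:ℝ)) (𝓝 (CHLS n))

/-- The best Sobolev constant in `ℝⁿ`. -/
noncomputable def Sbest (n : ℕ) : ℝ :=
  sInf { c : ℝ | ∃ u : Eu n → ℝ, ContDiff ℝ (⊤ : ℕ∞) u ∧ HasCompactSupport u ∧ u ≠ 0 ∧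
    c = (∫ x, ‖gradient u x‖ ^ 2) /
      (∫ x, |u x| ^ (2 * (n : ℝ) / ((n : ℝ) - 2))) ^ (((n : ℝ) - 2) / (n : ℝ)) }

/-- The explicit constant `α̃_n` of Theorem 1.2. -/
noncomputable def alphaTilde (n : ℕ) : ℝ :=
  ((n : ℝ) * ((n : ℝ) - 2) / Real.sqrt (Sbest n)) ^ (((n : ℝ) - 2) / 4) *
    (π ^ ((n : ℝ) / 2) * Real.Gamma 1 / Real.Gamma (((n : ℝ) + 2) / 2)) *
    (Real.Gamma 1 * π ^ (((n : ℝ) - 2) / 2) / Real.Gamma (((n : ℝ) + 2) / 2) *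
        (Real.Gamma (n : ℝ) / Real.Gamma ((n : ℝ) / 2)) ^ ((2 : ℝ) / (n : ℝ))) ^
      ((2 - (n : ℝ)) / 8)

/-- The sharp HLS constant `C_{n,μ}`. -/
noncomputable def Cnmu (n : ℕ) (μ : ℝ) : ℝ :=
  Real.Gamma (((n : ℝ) - μ) / 2) * π ^ (μ / 2) / Real.Gamma ((n : ℝ) - μ / 2) *
    (Real.Gamma (n : ℝ) / Real.Gamma ((n : ℝ) / 2)) ^ (1 - μ / (n : ℝ))

/-- The bubble normalisation constant `c̃_{n,μ}`. -/
noncomputable def ctilde (n : ℕ) (μ : ℝ) : ℝ :=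
  ((n : ℝ) * ((n : ℝ) - 2)) ^ (((n : ℝ) - 2) / 4) *
    Sbest n ^ ((((n : ℝ) - μ) * (2 - (n : ℝ))) / (4 * ((n : ℝ) - μ + 2))) *
    Cnmu n μ ^ ((2 - (n : ℝ)) / (2 * ((n : ℝ) - μ + 2)))

/-- The standard bubble `W[ξ,λ]`. -/
noncomputable def Wb (n : ℕ) (μ : ℝ) (ξ : Eu n) (l : ℝ) (x : Eu n) : ℝ :=
  ctilde n μ * (l / (1 + l ^ 2 * ‖x - ξ‖ ^ 2)) ^ (((n : ℝ) - 2) / 2)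

/-- The standard bubble `W = W[0,1]` with `μ = n-2`. -/
noncomputable def W0 (n : ℕ) : Eu n → ℝ := Wb n ((n : ℝ) - 2) 0 1

/-- `C^{1,α}`-type norm of `f` on a set `s`. -/
noncomputable def c1aNorm {n : ℕ} (a : ℝ) (s : Set (Eu n)) (f : Eu n → ℝ) : ℝ :=
  (⨆ x ∈ s, |f x|) + (⨆ x ∈ s, ‖gradient f x‖) +
    ⨆ x ∈ s, ⨆ y ∈ s, ‖gradient f x - gradient f y‖ / ‖x - y‖ ^ a


lemma s8_ker_int {n : ℕ} (hn : 3 ≤ n) (R : ℝ) :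
    IntegrableOn (fun z : Eu n => 1 / ‖z‖ ^ ((n : ℝ) - 2)) (ball 0 R) := by
  have : Nontrivial (Eu n) := by
    have : Nonempty (Fin n) := ⟨⟨0, by omega⟩⟩
    infer_instance
  have h := integrableOn_fun_norm_addHaar (E := Eu n) (volume : Measure (Eu n))
    (f := fun y : ℝ => 1 / y ^ ((n : ℝ) - 2)) (r := R)
  rw [h]
  have hd : Module.finrank ℝ (Eu n) = n := by simp
  rw [hd]
  have h2 : IntegrableOn (fun y : ℝ => y) (Set.Ioo 0 R) :=
    (continuous_id.integrableOn_Icc (a := 0) (b := R)).mono_set Set.Ioo_subset_Icc_self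
  refine h2.congr_fun ?_ measurableSet_Ioo
  intro y hy
  have hy0 : 0 < y := hy.1
  have : y ^ (n - 1) = y ^ ((n : ℝ) - 1) := by
    rw [← rpow_natCast]; congr 1; push_cast [Nat.cast_sub (show 1 ≤ n by omega)]; ring
  simp only [smul_eq_mul]
  rw [this, mul_one_div, ← rpow_sub hy0]
  ring_nf
  simp

/-- truncated kernel -/
def s8K (n : ℕ) (r : ℝ) (y : Eu n) : ℝ :=
  (ball (0 : Eu n) r).indicator (fun z : Eu n => 1 / ‖z‖ ^ ((n : ℝ) - 2)) y

def s8kap (n : ℕ) (r : ℝ) : ℝ := ∫ y, s8K n r y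

lemma s8K_nonneg {n : ℕ} (r : ℝ) (y : Eu n) : 0 ≤ s8K n r y :=
  Set.indicator_nonneg (fun _ _ => by positivity) y

lemma s8K_int {n : ℕ} (hn : 3 ≤ n) (r : ℝ) : Integrable (s8K n r) := by
  have := (integrable_indicator_iff (μ := (volume : Measure (Eu n))) measurableSet_ball).2
    (s8_ker_int hn r)
  exact this

lemma s8kap_nonneg {n : ℕ} (r : ℝ) : 0 ≤ s8kap n r :=
  integral_nonneg (fun y => s8K_nonneg r y)

lemma s8kap_small {n : ℕ} (hn : 3 ≤ n) {η : ℝ} (hη : 0 < η) : ∃ r, 0 < r ∧ s8kap n r < η := by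
  have h : Tendsto (fun j : ℕ => s8kap n (1 / ((j : ℝ) + 1))) atTop (𝓝 (∫ _y : Eu n, (0 : ℝ))) := by
    unfold s8kap
    refine tendsto_integral_of_dominated_convergence (s8K n 1) ?_ (s8K_int hn 1) ?_ ?_
    · intro j; exact (s8K_int hn _).aestronglyMeasurable
    · intro j; refine Eventually.of_forall fun y => ?_
      rw [Real.norm_of_nonneg (s8K_nonneg _ _)]
      refine Set.indicator_le_indicator_of_subset (ball_subset_ball ?_) (fun _ => by positivity) y
      rw [div_le_one (by positivity)]; linarith [(Nat.cast_nonneg j : (0 : ℝ) ≤ j)]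
    · refine Eventually.of_forall fun y => ?_
      by_cases hy : y = 0
      · subst hy
        have : ((n : ℝ) - 2) ≠ 0 := by
          have : (3 : ℝ) ≤ n := by exact_mod_cast hn
          linarith
        simp [s8K, Set.indicator, this]
      · have h1 : Tendsto (fun j : ℕ => 1 / ((j : ℝ) + 1)) atTop (𝓝 0) :=
          tendsto_one_div_add_atTop_nhds_zero_nat
        have h2 := h1.eventually (gt_mem_nhds (norm_pos_iff.2 hy))
        refine tendsto_const_nhds.congr' ?_
        filter_upwards [h2] with j hj
        rw [s8K, Set.indicator_of_notMem]
        simp only [mem_ball, dist_zero_right, not_lt]; exact hj.le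
  rw [integral_zero] at h
  obtain ⟨j, hj⟩ := (h.eventually (gt_mem_nhds hη)).exists
  exact ⟨_, by positivity, hj⟩

lemma s8_pt1 {n : ℕ} {R : ℝ} {x z : Eu n} (hx : x ∈ ball (0 : Eu n) R) (hz : z ∈ ball (0 : Eu n) R)
    {a m : ℝ} (ham : a ≤ m) :
    a / ‖x - z‖ ^ ((n : ℝ) - 2) ≤ m * s8K n (2 * R) (x - z) := by
  have : x - z ∈ ball (0 : Eu n) (2 * R) := by
    simp only [mem_ball, dist_zero_right] at *
    linarith [norm_sub_le x z]
  rw [s8K, Set.indicator_of_mem this, mul_one_div]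
  gcongr

lemma s8_pt2 {n : ℕ} (hn : 3 ≤ n) {r : ℝ} (hr : 0 < r) {x z : Eu n}
    {a m : ℝ} (ha : 0 ≤ a) (ham : a ≤ m) :
    a / ‖x - z‖ ^ ((n : ℝ) - 2) ≤ m * s8K n r (x - z) + (1 / r ^ ((n : ℝ) - 2)) * a := by
  have hn' : (3 : ℝ) ≤ n := by exact_mod_cast hn
  have hm : 0 ≤ m := ha.trans ham
  by_cases h : x - z ∈ ball (0 : Eu n) r
  · rw [s8K, Set.indicator_of_mem h, mul_one_div]
    have : a / ‖x - z‖ ^ ((n : ℝ) - 2) ≤ m / ‖x - z‖ ^ ((n : ℝ) - 2) := by gcongr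
    have : 0 ≤ 1 / r ^ ((n : ℝ) - 2) * a := by positivity
    linarith
  · rw [s8K, Set.indicator_of_notMem h, mul_zero, zero_add, one_div_mul_eq_div]
    simp only [mem_ball, dist_zero_right, not_lt] at h
    gcongr
    linarith

lemma s8_meas2 {n : ℕ} {f : Eu n → ℝ} (hfm : Measurable f) :
    Measurable (fun q : Eu n × Eu n => f q.2 / ‖q.1 - q.2‖ ^ ((n : ℝ) - 2)) := by
  refine (hfm.comp measurable_snd).div ?_
  exact ((measurable_fst.sub measurable_snd).norm.pow_const _)

lemma s8_rz_int {n : ℕ} (hn : 3 ≤ n) {S : Set (Eu n)} (hS : MeasurableSet S) {R : ℝ}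
    (hSR : S ⊆ ball 0 R) {f : Eu n → ℝ} (hfm : Measurable f) (hf0 : ∀ z, 0 ≤ f z)
    {m : ℝ} (hfle : ∀ z ∈ S, f z ≤ m) {x : Eu n} (hx : x ∈ ball (0 : Eu n) R) :
    IntegrableOn (fun z => f z / ‖x - z‖ ^ ((n : ℝ) - 2)) S := by
  have h1 : Integrable (fun z => m * s8K n (2 * R) (x - z)) :=
    ((s8K_int hn (2 * R)).comp_sub_left x).const_mul m
  refine h1.integrableOn.mono' ?_ ?_
  · exact ((s8_meas2 hfm).comp measurable_prodMk_left).aestronglyMeasurable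
  · filter_upwards [ae_restrict_mem hS] with z hz
    rw [Real.norm_of_nonneg (div_nonneg (hf0 z) (by positivity))]
    exact s8_pt1 hx (hSR hz) (hfle z hz)

lemma s8_rz_nonneg {n : ℕ} {S : Set (Eu n)} {f : Eu n → ℝ} (hf0 : ∀ z, 0 ≤ f z) (x : Eu n) :
    0 ≤ rz S f x :=
  integral_nonneg (fun z => div_nonneg (hf0 z) (by positivity))

lemma s8_rz_meas {n : ℕ} {S : Set (Eu n)} {f : Eu n → ℝ} (hfm : Measurable f) :
    Measurable (rz S f) := by
  have := (s8_meas2 hfm).stronglyMeasurable.integral_prod_right' (ν := volume.restrict S)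
  exact this.measurable

lemma s8_rz_le1 {n : ℕ} (hn : 3 ≤ n) {S : Set (Eu n)} (hS : MeasurableSet S) {R : ℝ}
    (hSR : S ⊆ ball 0 R) {f : Eu n → ℝ} (hfm : Measurable f) (hf0 : ∀ z, 0 ≤ f z)
    {m : ℝ} (hm : 0 ≤ m) (hfle : ∀ z ∈ S, f z ≤ m) {x : Eu n} (hx : x ∈ ball (0 : Eu n) R) :
    rz S f x ≤ m * s8kap n (2 * R) := by
  have h1 : Integrable (fun z => m * s8K n (2 * R) (x - z)) :=
    ((s8K_int hn (2 * R)).comp_sub_left x).const_mul m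
  calc rz S f x ≤ ∫ z in S, m * s8K n (2 * R) (x - z) := by
        refine setIntegral_mono_on (s8_rz_int hn hS hSR hfm hf0 hfle hx) h1.integrableOn hS ?_
        intro z hz; exact s8_pt1 hx (hSR hz) (hfle z hz)
    _ ≤ ∫ z, m * s8K n (2 * R) (x - z) := by
        refine setIntegral_le_integral h1 (Eventually.of_forall fun z => ?_)
        exact mul_nonneg hm (s8K_nonneg _ _)
    _ = m * s8kap n (2 * R) := by
        rw [integral_const_mul, integral_sub_left_eq_self (s8K n (2 * R)) volume x]; rfl

lemma s8_rz_le2 {n : ℕ} (hn : 3 ≤ n) {S : Set (Eu n)} (hS : MeasurableSet S) {R : ℝ}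
    (hSR : S ⊆ ball 0 R) {f : Eu n → ℝ} (hfm : Measurable f) (hf0 : ∀ z, 0 ≤ f z)
    {m : ℝ} (hm : 0 ≤ m) (hfle : ∀ z ∈ S, f z ≤ m) (hfi : IntegrableOn f S)
    {r : ℝ} (hr : 0 < r) {x : Eu n} (hx : x ∈ ball (0 : Eu n) R) :
    rz S f x ≤ m * s8kap n r + (1 / r ^ ((n : ℝ) - 2)) * ∫ z in S, f z := by
  have h1 : Integrable (fun z => m * s8K n r (x - z)) :=
    ((s8K_int hn r).comp_sub_left x).const_mul m
  have h2 := hfi.const_mul (1 / r ^ ((n : ℝ) - 2))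
  calc rz S f x ≤ ∫ z in S, (m * s8K n r (x - z) + (1 / r ^ ((n : ℝ) - 2)) * f z) := by
        refine setIntegral_mono_on (s8_rz_int hn hS hSR hfm hf0 hfle hx)
          (h1.integrableOn.add h2) hS ?_
        intro z hz; exact s8_pt2 hn hr (hf0 z) (hfle z hz)
    _ = (∫ z in S, m * s8K n r (x - z)) + (1 / r ^ ((n : ℝ) - 2)) * ∫ z in S, f z := by
        rw [integral_add h1.integrableOn h2, integral_const_mul (1 / r ^ ((n : ℝ) - 2))]
    _ ≤ (∫ z, m * s8K n r (x - z)) + (1 / r ^ ((n : ℝ) - 2)) * ∫ z in S, f z := by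
        refine add_le_add_left (setIntegral_le_integral h1 (Eventually.of_forall fun z => ?_)) _
        exact mul_nonneg hm (s8K_nonneg _ _)
    _ = _ := by
        rw [integral_const_mul, integral_sub_left_eq_self (s8K n r) volume x]; rfl

/-- lower bound -/
lemma s8_rz_ge {n : ℕ} (hn : 3 ≤ n) {S : Set (Eu n)} (hS : MeasurableSet S) {R : ℝ}
    (hSR : S ⊆ ball 0 R) {f : Eu n → ℝ} (hfm : Measurable f) (hf0 : ∀ z, 0 ≤ f z)
    {m : ℝ} (hfle : ∀ z ∈ S, f z ≤ m) (hfi : IntegrableOn f S)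
    {x : Eu n} (hx : x ∈ ball (0 : Eu n) R) :
    (1 / (2 * R) ^ ((n : ℝ) - 2)) * (∫ z in S, f z) ≤ rz S f x := by
  have hn' : (3 : ℝ) ≤ n := by exact_mod_cast hn
  rw [← integral_const_mul]
  have hae : ∀ᵐ z ∂(volume.restrict S), z ≠ x := by
    have : Nonempty (Fin n) := ⟨⟨0, by omega⟩⟩
    have : Nontrivial (Eu n) := inferInstance
    exact ae_restrict_of_ae (by simp [ae_iff])
  refine integral_mono_ae (hfi.const_mul _) (s8_rz_int hn hS hSR hfm hf0 hfle hx) ?_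
  filter_upwards [ae_restrict_mem hS, hae] with z hz hzx
  have h1 : 0 < ‖x - z‖ := norm_pos_iff.2 (sub_ne_zero.2 hzx.symm)
  have h2 : ‖x - z‖ ≤ 2 * R := by
    have := hSR hz
    simp only [mem_ball, dist_zero_right] at *
    linarith [norm_sub_le x z]
  show (1 / (2 * R) ^ ((n : ℝ) - 2)) * f z ≤ f z / ‖x - z‖ ^ ((n : ℝ) - 2)
  rw [one_div_mul_eq_div]
  have := hf0 z
  gcongr
  linarith

lemma s8_cont {n : ℕ} {Ω : Set (Eu n)} (hΩo : IsOpen Ω) {u : Eu n → ℝ}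
    (hc : ContinuousOn u (closure Ω)) (h0 : ∀ x ∈ Ωᶜ, u x = 0) : Continuous u := by
  have h1 : ContinuousOn u Ωᶜ := (continuousOn_const (c := (0 : ℝ))).congr h0
  have : ContinuousOn u (closure Ω ∪ Ωᶜ) :=
    hc.union_of_isClosed h1 isClosed_closure hΩo.isClosed_compl
  have hu : closure Ω ∪ Ωᶜ = Set.univ := by
    rw [Set.eq_univ_iff_forall]; intro x
    by_cases hx : x ∈ Ω
    · exact Or.inl (subset_closure hx)
    · exact Or.inr hx
  rw [hu] at this
  exact continuousOn_univ.1 this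

/-- partial derivative in direction i -/
def s8d {n : ℕ} (i : Fin n) (f : Eu n → ℝ) (x : Eu n) : ℝ :=
  fderiv ℝ f x (EuclideanSpace.single i 1)

lemma s8_lapl_eq {n : ℕ} (f : Eu n → ℝ) (x : Eu n) : lapl f x = ∑ i, s8d i (s8d i f) x := rfl

lemma s8_d_contDiffAt {n : ℕ} {Ω : Set (Eu n)} (hΩo : IsOpen Ω) {u : Eu n → ℝ}
    (hc : ContDiffOn ℝ 2 u Ω) (i : Fin n) {x : Eu n} (hx : x ∈ Ω) : ContDiffAt ℝ 1 (s8d i u) x := by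
  have h1 : ContDiffAt ℝ 2 u x := hc.contDiffAt (hΩo.mem_nhds hx)
  have h2 : ContDiffAt ℝ 1 (fderiv ℝ u) x := h1.fderiv_right (by norm_num)
  exact h2.clm_apply contDiffAt_const

/-- at an interior maximum of `u + A |x|²`, second derivatives nonpositive -/
lemma s8_max {n : ℕ} {Ω : Set (Eu n)} (hΩo : IsOpen Ω) {u : Eu n → ℝ}
    (hc : ContDiffOn ℝ 2 u Ω) (A : ℝ) {y : Eu n} (hy : y ∈ Ω)
    (hmax : IsLocalMax (fun x => u x + A * ‖x‖ ^ 2) y) (i : Fin n) :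
    s8d i (s8d i u) y + 2 * A ≤ 0 := by
  by_contra hcon
  push Not at hcon
  set e : Eu n := EuclideanSpace.single i 1 with he
  have hne : ‖e‖ = 1 := by simp [he]
  set c : ℝ → Eu n := fun t => y + t • e with hcdef
  have hcc : Continuous c := by fun_prop
  have hc0 : c 0 = y := by simp [hcdef]
  have hcd : ∀ t, HasDerivAt c e t := by
    intro t
    have := ((hasDerivAt_id t).smul_const e).const_add y
    simpa [hcdef] using this
  set b : ℝ := inner ℝ y e with hb
  have hnorm : ∀ t, ‖c t‖ ^ 2 = ‖y‖ ^ 2 + 2 * t * b + t ^ 2 := by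
    intro t
    simp only [hcdef]
    rw [norm_add_sq_real, inner_smul_right, norm_smul, hne, Real.norm_eq_abs, mul_one, sq_abs]
    ring
  set g : ℝ → ℝ := fun t => u (c t) + A * (‖y‖ ^ 2 + 2 * t * b + t ^ 2) with hg
  have hev : ∀ᶠ t in 𝓝 (0 : ℝ), c t ∈ Ω :=
    hcc.continuousAt.eventually_mem (by rw [hc0]; exact hΩo.mem_nhds hy)
  have hud : ∀ x ∈ Ω, DifferentiableAt ℝ u x := fun x hx =>
    (hc.contDiffAt (hΩo.mem_nhds hx)).differentiableAt (by norm_num)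
  have hpoly : ∀ t : ℝ, HasDerivAt (fun t : ℝ => A * (‖y‖ ^ 2 + 2 * t * b + t ^ 2))
      (A * (2 * b + 2 * t)) t := by
    intro t
    have h1 : HasDerivAt (fun t : ℝ => 2 * t * b) (2 * b) t := by
      simpa using ((hasDerivAt_id t).const_mul 2).mul_const b
    have h2 : HasDerivAt (fun t : ℝ => t ^ 2) (2 * t) t := by simpa using hasDerivAt_pow 2 t
    exact ((h1.const_add _).add h2).const_mul A
  have hg1 : ∀ t, c t ∈ Ω → HasDerivAt g (s8d i u (c t) + A * (2 * b + 2 * t)) t := by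
    intro t ht
    exact ((hud _ ht).hasFDerivAt.comp_hasDerivAt t (hcd t)).add (hpoly t)
  have hdg : deriv g =ᶠ[𝓝 0] fun t => s8d i u (c t) + A * (2 * b + 2 * t) := by
    filter_upwards [hev] with t ht using (hg1 t ht).deriv
  have hy' : c 0 ∈ Ω := by rw [hc0]; exact hy
  have hdd : HasDerivAt (fun t => s8d i u (c t) + A * (2 * b + 2 * t))
      (s8d i (s8d i u) (c 0) + A * 2) 0 := by
    have h1 : DifferentiableAt ℝ (s8d i u) (c 0) :=
      (s8_d_contDiffAt hΩo hc i hy').differentiableAt (by norm_num)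
    refine (h1.hasFDerivAt.comp_hasDerivAt 0 (hcd 0)).add ?_
    have h2 : HasDerivAt (fun t : ℝ => 2 * t) 2 0 := by
      simpa using (hasDerivAt_id (0 : ℝ)).const_mul 2
    exact (h2.const_add _).const_mul A
  have hdd' : deriv (deriv g) 0 = s8d i (s8d i u) y + A * 2 := by
    rw [hdg.deriv_eq, hdd.deriv, hc0]
  have hgmax : IsLocalMax g 0 := by
    have h1 : ∀ᶠ t in 𝓝 (0 : ℝ), u (c t) + A * ‖c t‖ ^ 2 ≤ u y + A * ‖y‖ ^ 2 := by
      have : Tendsto c (𝓝 0) (𝓝 y) := by rw [← hc0]; exact hcc.continuousAt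
      exact this.eventually hmax
    filter_upwards [h1] with t ht
    rw [hnorm] at ht
    simp only [hg, hc0]
    simpa using ht
  have hgmin : IsLocalMin g 0 := by
    refine isLocalMin_of_deriv_deriv_pos ?_ hgmax.deriv_eq_zero (hg1 0 hy').continuousAt
    rw [hdd']; linarith
  have hconst : g =ᶠ[𝓝 0] fun _ => g 0 := by
    filter_upwards [hgmax, hgmin] with t h1 h2 using le_antisymm h1 h2
  have : deriv (deriv g) 0 = 0 := by
    rw [hconst.deriv.deriv_eq]; simp
  rw [hdd'] at this
  linarith

lemma s8_maxprinc {n : ℕ} (hn : 3 ≤ n) {Ω : Set (Eu n)} (hΩo : IsOpen Ω) {R : ℝ}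
    (hΩR : Ω ⊆ ball 0 R) {u : Eu n → ℝ}
    (hc : ContDiffOn ℝ 2 u Ω) (hcont : Continuous u) (h0 : ∀ x ∈ Ωᶜ, u x = 0)
    {F : ℝ} (hF : 0 ≤ F) (hlap : ∀ x ∈ Ω, - lapl u x ≤ F) (x : Eu n) (hx : x ∈ Ω) :
    u x ≤ F * R ^ 2 := by
  have key : ∀ F', F < F' → u x ≤ F' * R ^ 2 := by
    intro F' hF'
    have hcomp : IsCompact (closure Ω) :=
      (isBounded_ball.subset hΩR).isCompact_closure
    obtain ⟨y, hyc, hy⟩ := hcomp.exists_isMaxOn ⟨x, subset_closure hx⟩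
      (f := fun x => u x + F' * ‖x‖ ^ 2) (by fun_prop)
    have hn' : (3 : ℝ) ≤ n := by exact_mod_cast hn
    by_cases hyΩ : y ∈ Ω
    · exfalso
      have hloc : IsLocalMax (fun x => u x + F' * ‖x‖ ^ 2) y :=
        hy.isLocalMax (mem_of_superset (hΩo.mem_nhds hyΩ) subset_closure)
      have h1 : ∑ i : Fin n, (s8d i (s8d i u) y + 2 * F') ≤ 0 :=
        Finset.sum_nonpos fun i _ => s8_max hΩo hc F' hyΩ hloc i
      rw [Finset.sum_add_distrib, ← s8_lapl_eq] at h1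
      simp only [Finset.sum_const, Finset.card_univ, Fintype.card_fin, nsmul_eq_mul] at h1
      have h2 := hlap y hyΩ
      nlinarith
    · have h1 : u x + F' * ‖x‖ ^ 2 ≤ u y + F' * ‖y‖ ^ 2 := hy (subset_closure hx)
      rw [h0 y hyΩ] at h1
      have h2 : ‖y‖ ≤ R := by
        have := closure_mono hΩR hyc
        have := closure_ball_subset_closedBall this
        simpa using this
      have h3 : ‖y‖ ^ 2 ≤ R ^ 2 := by gcongr
      nlinarith [sq_nonneg ‖x‖, hF.trans_lt hF']
  refine le_of_forall_gt_imp_ge_of_dense (a₂ := F * R ^ 2) (a₁ := u x) ?_ |> id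
  intro a ha
  have hR : 0 < R := by
    have := hΩR hx
    simp only [mem_ball, dist_zero_right] at this
    exact (norm_nonneg x).trans_lt this
  have := key (a / R ^ 2) (by rw [lt_div_iff₀ (by positivity)]; exact ha)
  rwa [div_mul_cancel₀ _ (by positivity)] at this

lemma s8_int_fderiv_zero {n : ℕ} {w : Eu n → ℝ} (hw : ContDiff ℝ 1 w) (hs : HasCompactSupport w)
    (i : Fin n) : Integrable (s8d i w) ∧ ∫ x, s8d i w x = 0 := by
  have hc : Continuous (s8d i w) := (hw.continuous_fderiv one_ne_zero).clm_apply continuous_const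
  have hs' : HasCompactSupport (s8d i w) := by
    refine (hs.fderiv (𝕜 := ℝ)).mono ?_
    intro x hx
    simp only [Function.mem_support, s8d] at *
    intro h; apply hx; simp [h]
  have hi : Integrable (s8d i w) := hc.integrable_of_hasCompactSupport hs'
  refine ⟨hi, ?_⟩
  have := integral_mul_fderiv_eq_neg_fderiv_mul_of_integrable (𝕜 := ℝ)
    (μ := (volume : Measure (Eu n)))
    (f := fun _ : Eu n => (1 : ℝ)) (g := w) (v := EuclideanSpace.single i 1)
    (by simp) (by simpa using (show Integrable (fun x => fderiv ℝ w x (EuclideanSpace.single i 1)) volume from hi))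
    (by simpa using hw.continuous.integrable_of_hasCompactSupport hs)
    (fun x _ => by fun_prop) (fun x _ => hw.differentiable one_ne_zero x)
  simpa [s8d] using this

def s8g (δ t : ℝ) : ℝ := max 0 (min 1 (t / δ - 1))
def s8G (δ s : ℝ) : ℝ := ∫ t in (0 : ℝ)..s, s8g δ t

lemma s8g_cont (δ : ℝ) : Continuous (s8g δ) := by unfold s8g; fun_prop
lemma s8g_nonneg (δ t : ℝ) : 0 ≤ s8g δ t := le_max_left _ _
lemma s8g_le_one (δ t : ℝ) : s8g δ t ≤ 1 := max_le zero_le_one (min_le_left _ _)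
lemma s8g_zero {δ t : ℝ} (hδ : 0 < δ) (h : t ≤ δ) : s8g δ t = 0 := by
  have : t / δ ≤ 1 := (div_le_one hδ).2 h
  exact max_eq_left ((min_le_right _ _).trans (by linarith))
lemma s8g_one {δ t : ℝ} (hδ : 0 < δ) (h : 2 * δ ≤ t) : s8g δ t = 1 := by
  have : 2 ≤ t / δ := (le_div_iff₀ hδ).2 h
  unfold s8g
  rw [min_eq_left (by linarith)]; simp
lemma s8g_ii (δ a b : ℝ) : IntervalIntegrable (s8g δ) volume a b :=
  (s8g_cont δ).intervalIntegrable _ _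
lemma s8G_deriv (δ s : ℝ) : HasDerivAt (s8G δ) (s8g δ s) s :=
  intervalIntegral.integral_hasDerivAt_right (s8g_ii _ _ _)
    ((s8g_cont δ).stronglyMeasurableAtFilter _ _) (s8g_cont δ).continuousAt
lemma s8G_contDiff (δ : ℝ) : ContDiff ℝ 1 (s8G δ) := by
  rw [contDiff_one_iff_deriv]
  refine ⟨fun s => (s8G_deriv δ s).differentiableAt, ?_⟩
  have : deriv (s8G δ) = s8g δ := funext fun s => (s8G_deriv δ s).deriv
  rw [this]; exact s8g_cont δ
lemma s8G_zero {δ s : ℝ} (hδ : 0 < δ) (h : s ≤ δ) : s8G δ s = 0 := by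
  unfold s8G
  rw [intervalIntegral.integral_congr (g := fun _ => (0 : ℝ))]
  · simp
  · intro t ht
    refine s8g_zero hδ ?_
    rw [Set.mem_uIcc] at ht
    rcases ht with ht | ht
    · exact ht.2.trans h
    · exact ht.2.trans hδ.le
lemma s8G_nonneg {δ s : ℝ} (hs : 0 ≤ s) : 0 ≤ s8G δ s :=
  intervalIntegral.integral_nonneg hs fun _ _ => s8g_nonneg _ _
lemma s8G_le {δ s : ℝ} (hs : 0 ≤ s) : s8G δ s ≤ s := by
  have := intervalIntegral.integral_mono_on hs (s8g_ii δ 0 s)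
    (intervalIntegrable_const (c := (1 : ℝ))) (fun t _ => s8g_le_one δ t)
  simpa [s8G] using this
lemma s8G_ge {δ s : ℝ} (hδ : 0 < δ) (hs : 0 ≤ s) : s - 2 * δ ≤ s8G δ s := by
  rcases le_total s (2 * δ) with h | h
  · linarith [s8G_nonneg (δ := δ) hs]
  · have h1 : s8G δ s = s8G δ (2 * δ) + ∫ t in (2 * δ)..s, s8g δ t :=
      (intervalIntegral.integral_add_adjacent_intervals (s8g_ii _ _ _) (s8g_ii _ _ _)).symm
    have h2 : ∫ t in (2 * δ)..s, s8g δ t = s - 2 * δ := by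
      rw [intervalIntegral.integral_congr (g := fun _ => (1 : ℝ))]
      · simp
      · intro t ht
        rw [Set.uIcc_of_le h] at ht
        exact s8g_one hδ ht.1
    linarith [s8G_nonneg (δ := δ) (s := 2 * δ) (by positivity)]

lemma s8_grad_sq {n : ℕ} (u : Eu n → ℝ) (x : Eu n) :
    ‖gradient u x‖ ^ 2 = ∑ i, s8d i u x ^ 2 := by
  rw [EuclideanSpace.norm_sq_eq]
  refine Finset.sum_congr rfl fun i _ => ?_
  rw [Real.norm_eq_abs, sq_abs]
  congr 1
  have h : inner ℝ (gradient u x) (EuclideanSpace.single i (1 : ℝ)) = s8d i u x := by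
    simp [gradient, s8d]
  rw [← h, EuclideanSpace.inner_single_right]
  simp

lemma s8_grad_norm {n : ℕ} (u : Eu n → ℝ) (x : Eu n) :
    ‖gradient u x‖ = ‖fderiv ℝ u x‖ := by
  simp [gradient]

lemma s8_Gu_support {n : ℕ} {Ω : Set (Eu n)} (hΩb : IsBounded Ω) {u : Eu n → ℝ}
    (hcont : Continuous u) (h0 : ∀ x ∈ Ωᶜ, u x = 0) {δ : ℝ} (hδ : 0 < δ) :
    IsCompact {x | δ ≤ u x} ∧ {x | δ ≤ u x} ⊆ Ω ∧ ∀ x, x ∉ {x | δ ≤ u x} → s8G δ (u x) = 0 := by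
  have hsub : {x | δ ≤ u x} ⊆ Ω := by
    intro x hx
    by_contra h
    have : u x = 0 := h0 x h
    simp only [Set.mem_setOf_eq, this] at hx
    linarith
  refine ⟨?_, hsub, ?_⟩
  · exact Metric.isCompact_of_isClosed_isBounded (isClosed_le continuous_const hcont)
      (hΩb.subset hsub)
  · intro x hx
    simp only [Set.mem_setOf_eq, not_le] at hx
    exact s8G_zero hδ hx.le

lemma s8_Gu_contDiff {n : ℕ} {Ω : Set (Eu n)} (hΩo : IsOpen Ω) {u : Eu n → ℝ}
    (hc : ContDiffOn ℝ 2 u Ω)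
    (hcont : Continuous u) (h0 : ∀ x ∈ Ωᶜ, u x = 0) {δ : ℝ} (hδ : 0 < δ)
    {h : Eu n → ℝ} (hh : ∀ x ∈ Ω, ContDiffAt ℝ 1 h x) :
    ContDiff ℝ 1 (fun x => s8G δ (u x) * h x) := by
  rw [contDiff_iff_contDiffAt]
  intro x
  by_cases hx : x ∈ Ω
  · have h1 : ContDiffAt ℝ 1 u x := (hc.contDiffAt (hΩo.mem_nhds hx)).of_le (by norm_num)
    exact ((s8G_contDiff δ).contDiffAt.comp x h1).mul (hh x hx)
  · have h1 : ∀ᶠ y in 𝓝 x, u y < δ :=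
      hcont.continuousAt.eventually (gt_mem_nhds (by rw [h0 x hx]; exact hδ))
    have h2 : (fun x => s8G δ (u x) * h x) =ᶠ[𝓝 x] fun _ => (0 : ℝ) := by
      filter_upwards [h1] with y hy
      rw [s8G_zero hδ hy.le, zero_mul]
    exact contDiffAt_const.congr_of_eventuallyEq h2

lemma s8_ibp {n : ℕ} {Ω : Set (Eu n)} (hΩo : IsOpen Ω) (hΩb : IsBounded Ω)
    {u f : Eu n → ℝ} (hc : ContDiffOn ℝ 2 u Ω) (hcont : Continuous u) (h0 : ∀ x ∈ Ωᶜ, u x = 0)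
    (hlap : ∀ x ∈ Ω, - lapl u x = f x) (hfu : IntegrableOn f Ω) {M : ℝ}
    (hpos : ∀ x ∈ Ω, 0 < u x) (hM : ∀ x ∈ Ω, u x ≤ M)
    {δ : ℝ} (hδ : 0 < δ) :
    IntegrableOn (fun x => s8G δ (u x) * f x) Ω ∧
    IntegrableOn (fun x => s8g δ (u x) * ‖gradient u x‖ ^ 2) Ω ∧
    ∫ x in Ω, s8g δ (u x) * ‖gradient u x‖ ^ 2 = ∫ x in Ω, s8G δ (u x) * f x := by
  obtain ⟨hK, hKΩ, hKz⟩ := s8_Gu_support hΩb hcont h0 hδ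
  have hGf : IntegrableOn (fun x => s8G δ (u x) * f x) Ω := by
    refine hfu.bdd_mul (c := M) ?_ ?_
    · exact ((s8G_contDiff δ).continuous.comp hcont).aestronglyMeasurable
    · filter_upwards [ae_restrict_mem hΩo.measurableSet] with x hx
      rw [Real.norm_of_nonneg (s8G_nonneg (hpos x hx).le)]
      exact (s8G_le (hpos x hx).le).trans (hM x hx)
  set w : Fin n → Eu n → ℝ := fun i x => s8G δ (u x) * s8d i u x with hw
  have hw1 : ∀ i, ContDiff ℝ 1 (w i) := fun i =>
    s8_Gu_contDiff hΩo hc hcont h0 hδ (fun x hx => s8_d_contDiffAt hΩo hc i hx)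
  have hw2 : ∀ i, HasCompactSupport (w i) := fun i =>
    HasCompactSupport.intro hK (fun x hx => by simp only [hw]; rw [hKz x hx, zero_mul])
  have hw3 : ∀ i, Integrable (s8d i (w i)) ∧ ∫ x, s8d i (w i) x = 0 := fun i => s8_int_fderiv_zero (hw1 i) (hw2 i) i
  have hQΩ : ∀ i, ∀ x ∈ Ω, s8d i (w i) x =
      s8g δ (u x) * s8d i u x ^ 2 + s8G δ (u x) * s8d i (s8d i u) x := by
    intro i x hx
    have h1 : DifferentiableAt ℝ u x :=
      (hc.contDiffAt (hΩo.mem_nhds hx)).differentiableAt (by norm_num)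
    have h2 : DifferentiableAt ℝ (s8d i u) x :=
      (s8_d_contDiffAt hΩo hc i hx).differentiableAt (by norm_num)
    have h3 : HasFDerivAt (fun x => s8G δ (u x)) (s8g δ (u x) • fderiv ℝ u x) x :=
      (s8G_deriv δ (u x)).comp_hasFDerivAt x h1.hasFDerivAt
    have h4 := h3.mul h2.hasFDerivAt
    have h5 : s8d i (w i) x = (s8G δ (u x) • fderiv ℝ (s8d i u) x +
        s8d i u x • s8g δ (u x) • fderiv ℝ u x) (EuclideanSpace.single i 1) := by
      rw [← h4.fderiv]; rfl
    rw [h5]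
    simp only [ContinuousLinearMap.add_apply, ContinuousLinearMap.smul_apply, smul_eq_mul]
    show _ * s8d i (s8d i u) x + s8d i u x * (_ * s8d i u x) = _
    ring
  have hQ0 : ∀ i, ∀ x ∉ Ω, s8d i (w i) x = 0 := by
    intro i x hx
    have h1 : ∀ᶠ y in 𝓝 x, u y < δ :=
      hcont.continuousAt.eventually (gt_mem_nhds (by rw [h0 x hx]; exact hδ))
    have h2 : w i =ᶠ[𝓝 x] fun _ => (0 : ℝ) := by
      filter_upwards [h1] with y hy
      simp only [hw]
      rw [s8G_zero hδ hy.le, zero_mul]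
    rw [s8d, h2.fderiv_eq]; simp
  have hQi : Integrable (fun x => ∑ i, s8d i (w i) x) :=
    integrable_finsetSum _ fun i _ => (hw3 i).1
  have hQint : ∫ x in Ω, ∑ i, s8d i (w i) x = 0 := by
    rw [setIntegral_eq_integral_of_forall_compl_eq_zero
      (fun x hx => Finset.sum_eq_zero fun i _ => hQ0 i x hx),
      integral_finsetSum _ fun i _ => (hw3 i).1]
    exact Finset.sum_eq_zero fun i _ => (hw3 i).2
  have heq : ∀ x ∈ Ω, (∑ i, s8d i (w i) x) + s8G δ (u x) * f x
      = s8g δ (u x) * ‖gradient u x‖ ^ 2 := by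
    intro x hx
    rw [Finset.sum_congr rfl (fun i _ => hQΩ i x hx), Finset.sum_add_distrib, ← Finset.mul_sum,
      ← Finset.mul_sum, ← s8_grad_sq, ← s8_lapl_eq, ← hlap x hx]
    ring
  have hadd : IntegrableOn (fun x => (∑ i, s8d i (w i) x) + s8G δ (u x) * f x) Ω :=
    hQi.integrableOn.add hGf
  refine ⟨hGf, hadd.congr_fun heq hΩo.measurableSet, ?_⟩
  rw [← setIntegral_congr_fun hΩo.measurableSet heq, integral_add hQi.integrableOn hGf, hQint,
    zero_add]

lemma s8_energy {n : ℕ} {Ω : Set (Eu n)} (hΩo : IsOpen Ω) (hΩb : IsBounded Ω)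
    {u f : Eu n → ℝ} (hc : ContDiffOn ℝ 2 u Ω) (hcont : Continuous u) (h0 : ∀ x ∈ Ωᶜ, u x = 0)
    (hlap : ∀ x ∈ Ω, - lapl u x = f x) (hfu : IntegrableOn f Ω) (hf0 : ∀ x, 0 ≤ f x) {M : ℝ}
    (hpos : ∀ x ∈ Ω, 0 < u x) (hM : ∀ x ∈ Ω, u x ≤ M) :
    IntegrableOn (fun x => ‖gradient u x‖ ^ 2) Ω ∧
    ∫ x in Ω, f x * u x ≤ ∫ x in Ω, ‖gradient u x‖ ^ 2 := by
  have key := fun (δ : ℝ) (hδ : 0 < δ) =>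
    s8_ibp hΩo hΩb hc hcont h0 hlap hfu hpos hM hδ
  have hfU : IntegrableOn (fun x => f x * u x) Ω := by
    refine hfu.mul_bdd (c := M) hcont.aestronglyMeasurable ?_
    filter_upwards [ae_restrict_mem hΩo.measurableSet] with x hx
    rw [Real.norm_of_nonneg (hpos x hx).le]; exact hM x hx
  have hup : ∀ δ, 0 < δ → ∫ x in Ω, s8g δ (u x) * ‖gradient u x‖ ^ 2 ≤ ∫ x in Ω, f x * u x := by
    intro δ hδ
    rw [(key δ hδ).2.2]
    refine setIntegral_mono_on (key δ hδ).1 hfU hΩo.measurableSet fun x hx => ?_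
    rw [mul_comm]
    exact mul_le_mul_of_nonneg_left (s8G_le (hpos x hx).le) (hf0 x)
  have hint : IntegrableOn (fun x => ‖gradient u x‖ ^ 2) Ω := by
    set d : ℕ → ℝ := fun j => 1 / ((j : ℝ) + 1) with hd
    have hd0 : ∀ j, 0 < d j := fun j => by simp only [hd]; positivity
    have hdl : Tendsto d atTop (𝓝 0) := tendsto_one_div_add_atTop_nhds_zero_nat
    have hcov : AECover (volume.restrict Ω) atTop (fun j => {x | 2 * d j ≤ u x}) := by
      constructor
      · filter_upwards [ae_restrict_mem hΩo.measurableSet] with x hx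
        have : Tendsto (fun j => 2 * d j) atTop (𝓝 0) := by simpa using hdl.const_mul 2
        filter_upwards [this.eventually (gt_mem_nhds (hpos x hx))] with j hj using hj.le
      · intro j; exact (isClosed_le continuous_const hcont).measurableSet
    have hms : ∀ j, MeasurableSet {x | 2 * d j ≤ u x} := fun j =>
      (isClosed_le continuous_const hcont).measurableSet
    have hj1 : ∀ j, IntegrableOn (fun x => s8g (d j) (u x) * ‖gradient u x‖ ^ 2)
        {x | 2 * d j ≤ u x} (volume.restrict Ω) := fun j => (key _ (hd0 j)).2.1.integrableOn
    have hj2 : ∀ j, Set.EqOn (fun x => s8g (d j) (u x) * ‖gradient u x‖ ^ 2)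
        (fun x => ‖gradient u x‖ ^ 2) {x | 2 * d j ≤ u x} := by
      intro j x hx
      simp only
      rw [s8g_one (hd0 j) hx, one_mul]
    refine hcov.integrable_of_integral_bounded_of_nonneg_ae (∫ x in Ω, f x * u x) ?_ ?_ ?_
    · intro j; exact (hj1 j).congr_fun (hj2 j) (hms j)
    · exact Eventually.of_forall fun x => by positivity
    · refine Eventually.of_forall fun j => ?_
      rw [← setIntegral_congr_fun (hms j) (hj2 j)]
      refine le_trans ?_ (hup _ (hd0 j))
      exact setIntegral_le_integral (key _ (hd0 j)).2.1
        (Eventually.of_forall fun x => mul_nonneg (s8g_nonneg _ _) (by positivity))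
  refine ⟨hint, ?_⟩
  have hlow : ∀ δ, 0 < δ → (∫ x in Ω, f x * u x) - 2 * δ * (∫ x in Ω, f x)
      ≤ ∫ x in Ω, ‖gradient u x‖ ^ 2 := by
    intro δ hδ
    rw [← integral_const_mul, ← integral_sub hfU (hfu.const_mul _)]
    calc _ ≤ ∫ x in Ω, s8G δ (u x) * f x := by
          refine setIntegral_mono_on (hfU.sub (hfu.const_mul _)) (key δ hδ).1 hΩo.measurableSet
            fun x hx => ?_
          nlinarith [s8G_ge hδ (hpos x hx).le, hf0 x]
      _ = _ := (key δ hδ).2.2.symm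
      _ ≤ _ := by
          refine setIntegral_mono_on (key δ hδ).2.1 hint hΩo.measurableSet fun x hx => ?_
          nlinarith [s8g_le_one δ (u x), sq_nonneg ‖gradient u x‖]
  have hlim : Tendsto (fun δ : ℝ => (∫ x in Ω, f x * u x) - 2 * δ * (∫ x in Ω, f x)) (𝓝[>] 0)
      (𝓝 ((∫ x in Ω, f x * u x) - 2 * 0 * (∫ x in Ω, f x))) := by
    refine Tendsto.mono_left ?_ nhdsWithin_le_nhds
    exact Continuous.tendsto (by fun_prop) 0
  have := le_of_tendsto hlim (by
    filter_upwards [self_mem_nhdsWithin] with δ hδ using hlow δ hδ)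
  simpa using this

open ContinuousLinearMap in
lemma s8_moll {n : ℕ} {w : Eu n → ℝ} (hw : ContDiff ℝ 1 w) (hs : HasCompactSupport w) {R : ℝ}
    (hR : ∀ x, R ≤ ‖x‖ → w x = 0) {η : ℝ} (hη : 0 < η) :
    ∃ ψ : Eu n → ℝ, ContDiff ℝ (⊤ : ℕ∞) ψ ∧ (∀ x, |ψ x - w x| ≤ η) ∧
      (∀ x, ‖fderiv ℝ ψ x - fderiv ℝ w x‖ ≤ η) ∧ (∀ x, R + 1 ≤ ‖x‖ → ψ x = 0) := by
  have hwc : Continuous w := hw.continuous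
  have hdc : Continuous (fderiv ℝ w) := hw.continuous_fderiv one_ne_zero
  have u1 : UniformContinuous w := hs.uniformContinuous_of_continuous hwc
  have u2 : UniformContinuous (fderiv ℝ w) :=
    (hs.fderiv ℝ).uniformContinuous_of_continuous hdc
  obtain ⟨d1, hd1, h1⟩ := Metric.uniformContinuous_iff.1 u1 η hη
  obtain ⟨d2, hd2, h2⟩ := Metric.uniformContinuous_iff.1 u2 η hη
  set d := min (min d1 d2) 1 with hd
  have hd0 : 0 < d := by positivity
  let φ : ContDiffBump (0 : Eu n) := ⟨d / 2, d, by positivity, by linarith⟩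
  have hφi : LocallyIntegrable (φ.normed volume) volume := φ.continuous_normed.locallyIntegrable
  refine ⟨convolution (φ.normed volume) w (lsmul ℝ ℝ) volume, ?_, ?_, ?_, ?_⟩
  · exact HasCompactSupport.contDiff_convolution_left _ φ.hasCompactSupport_normed φ.contDiff_normed
      hwc.locallyIntegrable
  · intro x
    refine φ.dist_normed_convolution_le hwc.aestronglyMeasurable fun y hy => ?_
    exact (h1 (lt_of_lt_of_le hy ((min_le_left _ _).trans (min_le_left _ _)))).le
  · intro x
    rw [(hs.hasFDerivAt_convolution_right (lsmul ℝ ℝ) hφi hw x).fderiv]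
    have : convolution (φ.normed volume) (fderiv ℝ w) ((lsmul ℝ ℝ).precompR (Eu n)) volume x
      = convolution (φ.normed volume) (fderiv ℝ w) (lsmul ℝ ℝ) volume x := by
      rw [convolution_def, convolution_def]
      refine integral_congr_ae (Eventually.of_forall fun y => ?_)
      ext z
      simp
    rw [this, ← dist_eq_norm]
    refine φ.dist_normed_convolution_le hdc.aestronglyMeasurable fun y hy => ?_
    exact (h2 (lt_of_lt_of_le hy ((min_le_left _ _).trans (min_le_right _ _)))).le
  · intro x hx
    rw [φ.normed_convolution_eq_right, hR x (by linarith)]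
    intro y hy
    have hy' : ‖y - x‖ < 1 := by
      rw [← dist_eq_norm]; exact lt_of_lt_of_le hy (min_le_right _ _)
    have : ‖x‖ ≤ ‖y‖ + ‖y - x‖ := by
      rw [norm_sub_rev]
      calc ‖x‖ = ‖y + (x - y)‖ := by congr 1; abel
        _ ≤ _ := norm_add_le _ _
    rw [hR x (by linarith), hR y (by linarith)]

lemma s8_fderiv_zero {n : ℕ} {f : Eu n → ℝ} {R : ℝ} (h : ∀ x, R ≤ ‖x‖ → f x = 0) {x : Eu n}
    (hx : R < ‖x‖) : fderiv ℝ f x = 0 := by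
  have : f =ᶠ[𝓝 x] fun _ => (0 : ℝ) := by
    filter_upwards [continuous_norm.continuousAt.eventually (lt_mem_nhds hx)] with y hy
    exact h y hy.le
  rw [this.fderiv_eq]; simp

lemma s8_test {n : ℕ} {R : ℝ} (hR : 0 < R) : ∃ C, 0 ≤ C ∧ ∀ w : Eu n → ℝ, ContDiff ℝ 1 w →
    (∀ x, R ≤ ‖x‖ → w x = 0) → ∀ t : ℝ, 0 < t → ∀ θ : ℝ, 0 < θ →
    ∃ v : Eu n → ℝ, ContDiff ℝ (⊤ : ℕ∞) v ∧ HasCompactSupport v ∧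
      (∀ x, ‖x‖ < R → w x + 3 * t ≤ v x) ∧
      ∫ x, ‖gradient v x‖ ^ 2 ≤ (∫ x, ‖gradient w x‖ ^ 2) + C * t ^ 2 + θ := by
  let φ : ContDiffBump (0 : Eu n) := ⟨R + 2, R + 3, by positivity, by linarith⟩
  have hφ1 : ∀ x : Eu n, ‖x‖ < R + 2 → fderiv ℝ φ x = 0 := by
    intro x hx
    have : (φ : Eu n → ℝ) =ᶠ[𝓝 x] fun _ => (1 : ℝ) := by
      filter_upwards [continuous_norm.continuousAt.eventually (gt_mem_nhds hx)] with y hy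
      exact φ.one_of_mem_closedBall (by simpa using hy.le)
    rw [this.fderiv_eq]; simp
  have hφc : ContDiff ℝ (⊤ : ℕ∞) φ := φ.contDiff
  have hci : ∀ f : Eu n → ℝ, ContDiff ℝ 1 f → HasCompactSupport f →
      Integrable (fun x => ‖fderiv ℝ f x‖ ^ 2) := by
    intro f hf hs
    have h1 : Continuous (fderiv ℝ f) := hf.continuous_fderiv one_ne_zero
    refine Continuous.integrable_of_hasCompactSupport (by fun_prop) ?_
    exact (hs.fderiv ℝ).comp_left (g := fun z => ‖z‖ ^ 2) (by simp)
  refine ⟨16 * ∫ x, ‖fderiv ℝ φ x‖ ^ 2, by positivity, ?_⟩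
  intro w hw hwR t ht θ hθ
  have hcs : ∀ f : Eu n → ℝ, ∀ R : ℝ, (∀ x, R ≤ ‖x‖ → f x = 0) → HasCompactSupport f := by
    intro f R h
    refine HasCompactSupport.intro (isCompact_closedBall (0 : Eu n) R) fun x hx => h x ?_
    simp at hx; exact hx.le
  have hws := hcs w R hwR
  have hdc : Continuous (fderiv ℝ w) := hw.continuous_fderiv one_ne_zero
  obtain ⟨B, hB⟩ := (hws.fderiv ℝ).exists_bound_of_continuous hdc
  have hB0 : 0 ≤ B := (norm_nonneg _).trans (hB 0)
  set V : ℝ := volume.real (closedBall (0 : Eu n) (R + 1)) with hV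
  have hV0 : 0 ≤ V := measureReal_nonneg
  set η : ℝ := min (min t 1) (θ / ((2 * B + 1) * (V + 1))) with hη
  have hη0 : 0 < η := by positivity
  obtain ⟨ψ, ψ1, ψ2, ψ3, ψ4⟩ := s8_moll hw hws hwR hη0
  have hψs := hcs ψ (R + 1) ψ4
  have hηt : η ≤ t := (min_le_left _ _).trans (min_le_left _ _)
  have hη1 : η ≤ 1 := (min_le_left _ _).trans (min_le_right _ _)
  have hηθ : (2 * B + 1) * η * V ≤ θ := by
    have h1 : η ≤ θ / ((2 * B + 1) * (V + 1)) := min_le_right _ _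
    rw [le_div_iff₀ (by positivity)] at h1
    nlinarith [mul_nonneg hη0.le hB0]
  have hvc : ContDiff ℝ (⊤ : ℕ∞) (fun x => ψ x + 4 * t * φ x) := ψ1.add (contDiff_const.mul hφc)
  have hvs : HasCompactSupport (fun x => ψ x + 4 * t * φ x) :=
    hψs.add (φ.hasCompactSupport.mul_left)
  have h1le : (1 : WithTop ℕ∞) ≤ ((⊤ : ℕ∞) : WithTop ℕ∞) := by exact_mod_cast le_top
  refine ⟨fun x => ψ x + 4 * t * φ x, hvc, hvs, ?_, ?_⟩
  · intro x hx
    have : φ x = 1 := φ.one_of_mem_closedBall (by simp [φ]; linarith)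
    have h2 := (abs_le.1 (ψ2 x)).1
    simp only [this]
    linarith
  · have hpt : ∀ x, ‖fderiv ℝ (fun x => ψ x + 4 * t * φ x) x‖ ^ 2 ≤
        ‖fderiv ℝ w x‖ ^ 2 + (16 * t ^ 2 * ‖fderiv ℝ φ x‖ ^ 2 +
          (closedBall (0 : Eu n) (R + 1)).indicator (fun _ => (2 * B + 1) * η) x) := by
      intro x
      have hd1 : DifferentiableAt ℝ ψ x := ψ1.differentiable (by simp) x
      have hd2 : DifferentiableAt ℝ φ x := hφc.differentiable (by simp) x
      have e1 : fderiv ℝ (fun x => ψ x + 4 * t * φ x) x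
          = fderiv ℝ ψ x + (4 * t) • fderiv ℝ φ x :=
        (hd1.hasFDerivAt.add (hd2.hasFDerivAt.const_mul (4 * t))).fderiv
      rw [e1]
      by_cases hx : ‖x‖ ≤ R + 1
      · rw [hφ1 x (by linarith), Set.indicator_of_mem (by simpa using hx)]
        simp only [smul_zero, add_zero, norm_zero]
        have a1 : ‖fderiv ℝ ψ x‖ ≤ ‖fderiv ℝ w x‖ + η := by
          have := norm_sub_norm_le (fderiv ℝ ψ x) (fderiv ℝ w x)
          linarith [ψ3 x]
        have a2 : ‖fderiv ℝ ψ x‖ ^ 2 ≤ (‖fderiv ℝ w x‖ + η) ^ 2 := by gcongr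
        nlinarith [hB x, norm_nonneg (fderiv ℝ w x)]
      · push Not at hx
        rw [s8_fderiv_zero ψ4 hx, Set.indicator_of_notMem (by simpa using hx)]
        rw [zero_add, norm_smul, Real.norm_of_nonneg (by positivity)]
        nlinarith [sq_nonneg ‖fderiv ℝ w x‖]
    simp_rw [s8_grad_norm]
    have i1 := hci w hw hws
    have i2 : Integrable (fun x => 16 * t ^ 2 * ‖fderiv ℝ φ x‖ ^ 2) :=
      (hci φ (hφc.of_le h1le) φ.hasCompactSupport).const_mul _
    have i3 : Integrable ((closedBall (0 : Eu n) (R + 1)).indicator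
        (fun _ => (2 * B + 1) * η)) :=
      (integrable_indicator_iff measurableSet_closedBall).2
        (integrableOn_const (isCompact_closedBall _ _).measure_lt_top.ne)
    calc _ ≤ ∫ x, ‖fderiv ℝ w x‖ ^ 2 + (16 * t ^ 2 * ‖fderiv ℝ φ x‖ ^ 2 +
          (closedBall (0 : Eu n) (R + 1)).indicator (fun _ => (2 * B + 1) * η) x) :=
          integral_mono (hci _ (hvc.of_le h1le) hvs) (i1.add (i2.add i3)) hpt
      _ = (∫ x, ‖fderiv ℝ w x‖ ^ 2) + (16 * t ^ 2 * (∫ x, ‖fderiv ℝ φ x‖ ^ 2)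
          + V * ((2 * B + 1) * η)) := by
          have i23 : Integrable (fun x => 16 * t ^ 2 * ‖fderiv ℝ φ x‖ ^ 2 +
            (closedBall (0 : Eu n) (R + 1)).indicator (fun _ => (2 * B + 1) * η) x) := i2.add i3
          rw [integral_add i1 i23, integral_add i2 i3, integral_const_mul,
            integral_indicator measurableSet_closedBall, setIntegral_const, smul_eq_mul]
      _ ≤ _ := by nlinarith

lemma s8_D_int {n : ℕ} (hn : 3 ≤ n) {S : Set (Eu n)} (hS : MeasurableSet S) {R : ℝ}
    (hSR : S ⊆ ball 0 R) {f : Eu n → ℝ} (hfm : Measurable f) (hf0 : ∀ z, 0 ≤ f z)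
    {m : ℝ} (hm : 0 ≤ m) (hfle : ∀ z ∈ S, f z ≤ m) {g : Eu n → ℝ} (hgm : Measurable g)
    (hg0 : ∀ z, 0 ≤ g z) {m' : ℝ} (hgle : ∀ z ∈ S, g z ≤ m') :
    IntegrableOn (fun x => rz S f x * g x) S ∧
    ∫ x in S, rz S f x * g x ≤ m * s8kap n (2 * R) * m' * volume.real S := by
  have hfin : volume S < ⊤ := (isBounded_ball.subset hSR).measure_lt_top
  have hb : ∀ x ∈ S, rz S f x * g x ≤ m * s8kap n (2 * R) * m' := fun x hx =>
    mul_le_mul (s8_rz_le1 hn hS hSR hfm hf0 hm hfle (hSR hx)) (hgle x hx) (hg0 x)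
      (mul_nonneg hm (s8kap_nonneg _))
  have hi : IntegrableOn (fun x => rz S f x * g x) S := by
    refine Measure.integrableOn_of_bounded (M := m * s8kap n (2 * R) * m') hfin.ne
      ((s8_rz_meas hfm).mul hgm).aestronglyMeasurable ?_
    filter_upwards [ae_restrict_mem hS] with x hx
    rw [Real.norm_of_nonneg (mul_nonneg (s8_rz_nonneg hf0 x) (hg0 x))]
    exact hb x hx
  refine ⟨hi, ?_⟩
  have := setIntegral_mono_on hi (integrableOn_const (C := m * s8kap n (2 * R) * m') hfin.ne) hS hb
  rw [setIntegral_const, smul_eq_mul] at this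
  linarith

lemma s8_den {n : ℕ} (hn : 3 ≤ n) {S : Set (Eu n)} (hS : MeasurableSet S)
    {f : Eu n → ℝ} (hfc : Continuous f) (hfs : HasCompactSupport f) (hf0 : ∀ z, 0 ≤ f z)
    {h : Eu n → ℝ} (hhm : Measurable h) (hh0 : ∀ z, 0 ≤ h z) (hhf : ∀ z ∈ S, h z ≤ f z)
    (hSb : IsBounded S) :
    ∫ x in S, rz S h x * h x ≤ ∫ x, rz Set.univ f x * f x := by
  obtain ⟨R, hR⟩ := (hSb.union hfs.isCompact.isBounded).subset_ball 0
  have hSR : S ⊆ ball 0 R := Set.subset_union_left.trans hR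
  have hf' : ∀ x ∉ ball (0 : Eu n) R, f x = 0 := fun x hx =>
    image_eq_zero_of_notMem_tsupport fun hx' => hx (hR (Or.inr hx'))
  obtain ⟨B, hB⟩ := hfs.exists_bound_of_continuous hfc
  have hB' : ∀ x, f x ≤ B := fun x => (le_abs_self _).trans (hB x)
  have hB0 : 0 ≤ B := (norm_nonneg _).trans (hB 0)
  have hrz : ∀ x, rz Set.univ f x = rz (ball 0 R) f x := by
    intro x
    unfold rz rzk
    rw [setIntegral_univ, setIntegral_eq_integral_of_forall_compl_eq_zero]
    intro z hz; rw [hf' z hz, zero_div]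
  simp_rw [hrz]
  have e1 : ∫ x, rz (ball 0 R) f x * f x = ∫ x in ball 0 R, rz (ball 0 R) f x * f x := by
    rw [setIntegral_eq_integral_of_forall_compl_eq_zero]
    intro z hz; rw [hf' z hz, mul_zero]
  rw [e1]
  have i1 := (s8_D_int hn measurableSet_ball (subset_refl (ball (0 : Eu n) R)) hfc.measurable hf0
    hB0 (fun z _ => hB' z) hfc.measurable hf0 (fun z _ => hB' z)).1
  have hhB : ∀ z ∈ S, h z ≤ B := fun z hz => (hhf z hz).trans (hB' z)
  have i2 := (s8_D_int hn hS hSR hhm hh0 hB0 hhB hhm hh0 hhB).1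
  refine le_trans ?_ (setIntegral_mono_set i1 ?_ hSR.eventuallyLE)
  · refine setIntegral_mono_on i2 (i1.mono_set hSR) hS fun x hx => ?_
    refine mul_le_mul ?_ (hhf x hx) (hh0 x) (s8_rz_nonneg hf0 x)
    have i3 := s8_rz_int hn measurableSet_ball (subset_refl (ball (0 : Eu n) R)) hfc.measurable hf0
      (fun z _ => hB' z) (hSR hx)
    have i4 := s8_rz_int hn hS hSR hhm hh0 hhB (hSR hx)
    refine le_trans ?_ (setIntegral_mono_set i3 ?_ hSR.eventuallyLE)
    · refine setIntegral_mono_on i4 (i3.mono_set hSR) hS fun z hz => ?_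
      exact div_le_div_of_nonneg_right (hhf z hz) (by positivity)
    · exact Eventually.of_forall fun z => div_nonneg (hf0 z) (by positivity)
  · exact Eventually.of_forall fun z => mul_nonneg (s8_rz_nonneg hf0 z) (hf0 z)

def s8D {n : ℕ} (Ω : Set (Eu n)) (q : ℝ) (u : Eu n → ℝ) : ℝ :=
  ∫ x in Ω, rz Ω (fun z => |u z| ^ q) x * |u x| ^ q

lemma s8_pw_cont {n : ℕ} {u : Eu n → ℝ} (hcont : Continuous u) {q : ℝ} (hq : 0 ≤ q) :
    Continuous (fun z => |u z| ^ q) :=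
  hcont.abs.rpow_const fun _ => Or.inr hq

lemma s8_pw_le {M a q p : ℝ} (hM : 1 ≤ M) (ha : 0 ≤ a) (haM : a ≤ M) (hq : 0 ≤ q) (hqp : q ≤ p) :
    a ^ q ≤ M ^ p :=
  (Real.rpow_le_rpow ha haM hq).trans (Real.rpow_le_rpow_of_exponent_le hM hqp)

structure S8Sol {n : ℕ} (Ω : Set (Eu n)) (R M p q : ℝ) (u : Eu n → ℝ) : Prop where
  op : IsOpen Ω
  ne : Ω.Nonempty
  sub : Ω ⊆ ball 0 R
  c2 : ContDiffOn ℝ 2 u Ω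
  cont : Continuous u
  zero : ∀ x ∈ Ωᶜ, u x = 0
  pos : ∀ x ∈ Ω, 0 < u x
  le : ∀ x ∈ Ω, u x ≤ M
  lap : ∀ x ∈ Ω, - lapl u x = rz Ω (fun z => |u z| ^ q) x * |u x| ^ (q - 1)
  q2 : 2 ≤ q
  qp : q ≤ p
  M1 : 1 ≤ M
  R1 : 1 ≤ R

lemma S8Sol.abs_le {n : ℕ} {Ω : Set (Eu n)} {R M p q : ℝ} {u : Eu n → ℝ} (H : S8Sol Ω R M p q u)
    (x : Eu n) : |u x| ≤ M := by
  by_cases hx : x ∈ Ω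
  · rw [abs_of_pos (H.pos x hx)]; exact H.le x hx
  · rw [H.zero x hx, abs_zero]; linarith [H.M1]

lemma s8_D_upper {n : ℕ} (hn : 3 ≤ n) {Ω : Set (Eu n)} {R M p q : ℝ} {u : Eu n → ℝ}
    (H : S8Sol Ω R M p q u) :
    s8D Ω q u ≤ M ^ p * s8kap n (2 * R) * M ^ p * volume.real Ω := by
  have hq := H.q2
  have hM := H.M1
  have hb : ∀ z ∈ Ω, |u z| ^ q ≤ M ^ p := fun z _ =>
    s8_pw_le hM (abs_nonneg _) (H.abs_le z) (by linarith) H.qp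
  have hm := (s8_pw_cont H.cont (q := q) (by linarith)).measurable
  have h0 : ∀ z, 0 ≤ |u z| ^ q := fun z => by positivity
  exact (s8_D_int hn H.op.measurableSet H.sub hm h0 (by positivity) hb hm h0 hb).2

lemma s8_D_energy {n : ℕ} (hn : 3 ≤ n) {Ω : Set (Eu n)} {R M p q : ℝ} {u : Eu n → ℝ}
    (H : S8Sol Ω R M p q u) :
    IntegrableOn (fun x => ‖gradient u x‖ ^ 2) Ω ∧ s8D Ω q u ≤ ∫ x in Ω, ‖gradient u x‖ ^ 2 := by
  have hq := H.q2
  have hM := H.M1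
  have hb : ∀ z ∈ Ω, |u z| ^ q ≤ M ^ p := fun z _ =>
    s8_pw_le hM (abs_nonneg _) (H.abs_le z) (by linarith) H.qp
  have hb' : ∀ z ∈ Ω, |u z| ^ (q - 1) ≤ M ^ p := fun z _ =>
    s8_pw_le hM (abs_nonneg _) (H.abs_le z) (by linarith) (by linarith [H.qp])
  have hm := (s8_pw_cont H.cont (q := q) (by linarith)).measurable
  have hm' := (s8_pw_cont H.cont (q := q - 1) (by linarith)).measurable
  have h0 : ∀ z, 0 ≤ |u z| ^ q := fun z => by positivity
  have h0' : ∀ z, 0 ≤ |u z| ^ (q - 1) := fun z => by positivity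
  have hi := (s8_D_int hn H.op.measurableSet H.sub hm h0 (by positivity) hb hm' h0' hb').1
  obtain ⟨e1, e2⟩ := s8_energy H.op (isBounded_ball.subset H.sub) H.c2 H.cont H.zero H.lap hi
    (fun x => mul_nonneg (s8_rz_nonneg h0 x) (h0' x)) H.pos H.le
  refine ⟨e1, le_of_eq_of_le ?_ e2⟩
  refine setIntegral_congr_fun H.op.measurableSet fun x hx => ?_
  have hx' := H.pos x hx
  rw [mul_assoc, abs_of_pos hx', ← Real.rpow_add_one hx'.ne', sub_add_cancel]

lemma s8_D_lower {n : ℕ} (hn : 3 ≤ n) {R M p : ℝ} (hR : 1 ≤ R) (hM : 1 ≤ M) :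
    ∃ c, 0 < c ∧ c ≤ 1 ∧ ∀ (Ω : Set (Eu n)) (q : ℝ) (u : Eu n → ℝ),
      S8Sol Ω R M p q u → c ≤ s8D Ω q u := by
  have hMp : 0 < M ^ p := by positivity
  obtain ⟨r, hr, hκ⟩ := s8kap_small (n := n) hn (η := 1 / (2 * M ^ p * M ^ p * R ^ 2))
    (by positivity)
  rw [lt_div_iff₀ (by positivity)] at hκ
  set k : ℝ := (n : ℝ) - 2
  set ρ : ℝ := 1 / r ^ k with hρ
  have hρ0 : 0 < ρ := by positivity
  set c0 : ℝ := 1 / (2 * M ^ p * R ^ 2 * ρ) with hc0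
  have hc00 : 0 < c0 := by positivity
  set σ : ℝ := 1 / (2 * R) ^ k with hσ
  have hσ0 : 0 < σ := by positivity
  refine ⟨min 1 (σ * c0 ^ 2), by positivity, min_le_left _ _, ?_⟩
  intro Ω q u H
  refine (min_le_right _ _).trans ?_
  have hq := H.q2
  have hb : ∀ z ∈ Ω, |u z| ^ q ≤ M ^ p := fun z _ =>
    s8_pw_le hM (abs_nonneg _) (H.abs_le z) (by linarith) H.qp
  have hcq := s8_pw_cont H.cont (q := q) (by linarith)
  have hm := hcq.measurable
  have h0 : ∀ z, 0 ≤ |u z| ^ q := fun z => by positivity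
  have hbd : IsBounded Ω := isBounded_ball.subset H.sub
  have hfi : IntegrableOn (fun z => |u z| ^ q) Ω :=
    (hcq.continuousOn.integrableOn_compact hbd.isCompact_closure).mono_set subset_closure
  set I : ℝ := ∫ z in Ω, |u z| ^ q with hI
  have hI0 : 0 ≤ I := integral_nonneg h0
  -- maximum point
  obtain ⟨x0, hx0, hmax⟩ := hbd.isCompact_closure.exists_isMaxOn H.ne.closure H.cont.continuousOn
  have hmax' : ∀ x ∈ Ω, u x ≤ u x0 := fun x hx => hmax (subset_closure hx)
  obtain ⟨y, hy⟩ := H.ne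
  have hmpos : 0 < u x0 := (H.pos y hy).trans_le (hmax' y hy)
  have hx0Ω : x0 ∈ Ω := by
    by_contra h
    rw [H.zero x0 h] at hmpos; exact lt_irrefl _ hmpos
  have hF : ∀ x ∈ Ω, - lapl u x ≤ u x0 * (M ^ p * (M ^ p * s8kap n r + ρ * I)) := by
    intro x hx
    rw [H.lap x hx]
    have a1 := s8_rz_le2 hn H.op.measurableSet H.sub hm h0 hMp.le hb hfi hr (H.sub hx)
    have hx' := H.pos x hx
    have a2 : |u x| ^ (q - 1) ≤ u x0 * M ^ p := by
      have : q - 1 = (q - 2) + 1 := by ring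
      rw [abs_of_pos hx', this, Real.rpow_add_one hx'.ne', mul_comm]
      exact mul_le_mul (hmax' x hx) (s8_pw_le hM hx'.le (H.le x hx) (by linarith)
        (by linarith [H.qp])) (by positivity) hmpos.le
    calc _ ≤ (M ^ p * s8kap n r + ρ * I) * (u x0 * M ^ p) :=
          mul_le_mul a1 a2 (by positivity) ((s8_rz_nonneg h0 x).trans a1)
      _ = _ := by ring
  have hκ0 := s8kap_nonneg (n := n) r
  have hmp := s8_maxprinc hn H.op H.sub H.c2 H.cont H.zero (by positivity) hF x0 hx0Ω
  have h1 : 1 ≤ (M ^ p * (M ^ p * s8kap n r + ρ * I)) * R ^ 2 := by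
    by_contra hcon
    push Not at hcon
    nlinarith
  have hIc : c0 ≤ I := by
    rw [hc0, div_le_iff₀ (by positivity)]
    nlinarith
  have hlow : ∀ x ∈ Ω, σ * I * |u x| ^ q ≤ rz Ω (fun z => |u z| ^ q) x * |u x| ^ q := fun x hx =>
    mul_le_mul_of_nonneg_right
      (s8_rz_ge hn H.op.measurableSet H.sub hm h0 hb hfi (H.sub hx)) (h0 x)
  have hDi := (s8_D_int hn H.op.measurableSet H.sub hm h0 hMp.le hb hm h0 hb).1
  have := setIntegral_mono_on (hfi.const_mul (σ * I)) hDi H.op.measurableSet hlow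
  rw [integral_const_mul, ← hI] at this
  calc σ * c0 ^ 2 ≤ σ * I ^ 2 := by gcongr
    _ = σ * I * I := by ring
    _ ≤ _ := this

lemma s8_w_energy {n : ℕ} {Ω : Set (Eu n)} {R M p q : ℝ} {u : Eu n → ℝ}
    (H : S8Sol Ω R M p q u) {δ : ℝ} (hδ : 0 < δ)
    (hi : IntegrableOn (fun x => ‖gradient u x‖ ^ 2) Ω) :
    ∫ x, ‖gradient (fun x => s8G δ (u x)) x‖ ^ 2 ≤ ∫ x in Ω, ‖gradient u x‖ ^ 2 := by
  have h0 : ∀ x ∉ Ω, ‖gradient (fun x => s8G δ (u x)) x‖ ^ 2 = 0 := by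
    intro x hx
    have h1 : ∀ᶠ y in 𝓝 x, u y < δ :=
      H.cont.continuousAt.eventually (gt_mem_nhds (by rw [H.zero x hx]; exact hδ))
    have h2 : (fun x => s8G δ (u x)) =ᶠ[𝓝 x] fun _ => (0 : ℝ) := by
      filter_upwards [h1] with y hy
      rw [s8G_zero hδ hy.le]
    rw [s8_grad_norm, h2.fderiv_eq]; simp
  rw [← setIntegral_eq_integral_of_forall_compl_eq_zero h0]
  refine integral_mono_of_nonneg (Eventually.of_forall fun x => by positivity) hi ?_
  filter_upwards [ae_restrict_mem H.op.measurableSet] with x hx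
  have h1 : DifferentiableAt ℝ u x :=
    (H.c2.contDiffAt (H.op.mem_nhds hx)).differentiableAt (by norm_num)
  have h3 : HasFDerivAt (fun x => s8G δ (u x)) (s8g δ (u x) • fderiv ℝ u x) x :=
    (s8G_deriv δ (u x)).comp_hasFDerivAt x h1.hasFDerivAt
  rw [s8_grad_norm, s8_grad_norm, h3.fderiv, norm_smul, Real.norm_of_nonneg (s8g_nonneg _ _)]
  have := s8g_le_one δ (u x)
  have h4 := s8g_nonneg δ (u x)
  have h5 : s8g δ (u x) * ‖fderiv ℝ u x‖ ≤ ‖fderiv ℝ u x‖ :=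
    mul_le_of_le_one_left (norm_nonneg _) this
  gcongr

lemma s8_CHLS_nonneg (n : ℕ) : 0 ≤ CHLS n := by
  refine Real.sInf_nonneg ?_
  rintro c ⟨v, -, -, -, rfl⟩
  refine div_nonneg (integral_nonneg fun x => by positivity) (Real.rpow_nonneg ?_ _)
  exact integral_nonneg fun x => mul_nonneg (s8_rz_nonneg (fun z => by positivity) x)
    (by positivity)

lemma s8_CHLS_le {n : ℕ} {v : Eu n → ℝ} (h1 : ContDiff ℝ (⊤ : ℕ∞) v) (h2 : HasCompactSupport v)
    (h3 : v ≠ 0) : CHLS n ≤ (∫ x, ‖gradient v x‖ ^ 2) /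
      (∫ x, rz Set.univ (fun z => |v z| ^ pcrit n) x * |v x| ^ pcrit n) ^ (1 / pcrit n) := by
  refine csInf_le ⟨0, ?_⟩ ⟨v, h1, h2, h3, rfl⟩
  rintro c ⟨v, -, -, -, rfl⟩
  refine div_nonneg (integral_nonneg fun x => by positivity) (Real.rpow_nonneg ?_ _)
  exact integral_nonneg fun x => mul_nonneg (s8_rz_nonneg (fun z => by positivity) x)
    (by positivity)

lemma s8_key {n : ℕ} (hn : 3 ≤ n) {R : ℝ} (hR : 1 ≤ R) : ∃ C, 0 ≤ C ∧
    ∀ (Ω : Set (Eu n)) (M q : ℝ) (u : Eu n → ℝ), S8Sol Ω R M (pcrit n) q u → 0 < s8D Ω q u →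
    ∀ t : ℝ, 0 < t →
    CHLS n * ((t ^ (pcrit n - q) * (1 + t / M) ^ q) ^ 2 * s8D Ω q u) ^ (1 / pcrit n)
      ≤ (∫ x in Ω, ‖gradient u x‖ ^ 2) + C * t ^ 2 := by
  obtain ⟨C, hC, hT⟩ := s8_test (n := n) (R := R) (by linarith)
  refine ⟨C, hC, ?_⟩
  intro Ω M q u H hD t ht
  set p := pcrit n with hp
  have hM := H.M1
  have hq2 := H.q2
  have hqp := H.qp
  refine le_of_forall_pos_le_add fun θ hθ => ?_
  have hw : ContDiff ℝ 1 (fun x => s8G t (u x)) := by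
    have := s8_Gu_contDiff H.op H.c2 H.cont H.zero ht (h := fun _ => 1)
      (fun x _ => contDiffAt_const)
    simpa using this
  have hwR : ∀ x, R ≤ ‖x‖ → s8G t (u x) = 0 := by
    intro x hx
    have : x ∉ Ω := fun h => by
      have := H.sub h
      simp at this; linarith
    rw [H.zero x this]; exact s8G_zero ht ht.le
  obtain ⟨v, v1, v2, v3, v4⟩ := hT _ hw hwR t ht θ hθ
  have hvu : ∀ x ∈ Ω, u x + t ≤ v x := by
    intro x hx
    have h1 := v3 x (by simpa using H.sub hx)
    have h2 := s8G_ge ht (H.pos x hx).le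
    linarith
  have hv0 : v ≠ 0 := by
    obtain ⟨y, hy⟩ := H.ne
    intro h
    have h1 := hvu y hy
    have h2 := H.pos y hy
    rw [h] at h1
    simp at h1; linarith
  set c : ℝ := t ^ (p - q) * (1 + t / M) ^ q with hc
  have hc0 : 0 < c := by positivity
  have hle : ∀ x ∈ Ω, c * |u x| ^ q ≤ |v x| ^ p := by
    intro x hx
    have hu := H.pos x hx
    have h1 := hvu x hx
    rw [abs_of_pos hu, abs_of_pos (by linarith)]
    have h2 : (u x + t) ^ p ≤ v x ^ p := Real.rpow_le_rpow (by linarith) h1 (by linarith)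
    refine le_trans ?_ h2
    have h3 : (u x + t) ^ p = (u x + t) ^ (p - q) * (u x + t) ^ q := by
      rw [← Real.rpow_add (by linarith)]; congr 1; ring
    rw [h3, hc, mul_assoc, ← Real.mul_rpow (by positivity) hu.le]
    have h4 : (1 + t / M) * u x ≤ u x + t := by
      have : t / M * u x ≤ t := by
        rw [div_mul_eq_mul_div, div_le_iff₀ (by linarith)]
        exact mul_le_mul_of_nonneg_left (H.le x hx) ht.le
      linarith
    have h5 : t ^ (p - q) ≤ (u x + t) ^ (p - q) :=
      Real.rpow_le_rpow ht.le (by linarith) (by linarith)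
    have h6 : ((1 + t / M) * u x) ^ q ≤ (u x + t) ^ q :=
      Real.rpow_le_rpow (by positivity) h4 (by linarith)
    exact mul_le_mul h5 h6 (by positivity) (by positivity)
  have hm := (s8_pw_cont H.cont (q := q) (by linarith)).measurable
  have hvp : HasCompactSupport (fun z => |v z| ^ p) :=
    v2.comp_left (g := fun s => |s| ^ p) (by
      simp only [abs_zero]; exact Real.zero_rpow (by linarith))
  have hden := s8_den hn H.op.measurableSet (s8_pw_cont v1.continuous (q := p) (by linarith)) hvp
    (fun z => by positivity) (h := fun x => c * |u x| ^ q) (measurable_const.mul hm)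
    (fun z => by positivity) hle (isBounded_ball.subset H.sub)
  have hrz : ∀ x, rz Ω (fun x => c * |u x| ^ q) x = c * rz Ω (fun x => |u x| ^ q) x := by
    intro x
    unfold rz rzk
    rw [← integral_const_mul]
    congr 1; ext z; ring
  have hD2 : ∫ x in Ω, rz Ω (fun x => c * |u x| ^ q) x * (c * |u x| ^ q) = c ^ 2 * s8D Ω q u := by
    unfold s8D
    rw [← integral_const_mul]
    congr 1; ext x; rw [hrz]; ring
  rw [hD2] at hden
  have hpos : 0 < c ^ 2 * s8D Ω q u := by positivity
  have hS := s8_CHLS_le v1 v2 hv0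
  rw [le_div_iff₀ (Real.rpow_pos_of_pos (hpos.trans_le hden) _)] at hS
  have hwE := s8_w_energy H ht (s8_D_energy hn H).1
  calc CHLS n * (c ^ 2 * s8D Ω q u) ^ (1 / p) ≤ _ :=
        mul_le_mul_of_nonneg_left (Real.rpow_le_rpow hpos.le hden
          (one_div_nonneg.2 (by linarith))) (s8_CHLS_nonneg n)
    _ ≤ _ := hS
    _ ≤ _ := v4
    _ ≤ _ := by linarith

lemma s8_alg {S M K : ℝ} (hS : 0 < S) (hM : 1 ≤ M) (hK : 0 ≤ K)
    (h : ∀ t, 0 < t → S * (1 + t / M) ^ 2 ≤ S + K * t ^ 2) : False := by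
  set s : ℝ := S / M with hs
  have hs0 : 0 < s := by positivity
  set t : ℝ := s / (K + 1) with ht
  have ht0 : 0 < t := by positivity
  have h1 := h t ht0
  have h2 : S * (1 + t / M) ^ 2 = S + 2 * s * t + S * (t / M) ^ 2 := by
    rw [hs]; ring
  have h3 : 0 ≤ S * (t / M) ^ 2 := by positivity
  have h4 : (K + 1) * t = s := by rw [ht]; field_simp
  have h5 : 2 * s * t ≤ K * t ^ 2 := by linarith
  have h6 : 2 * s ≤ K * t := by
    by_contra hc
    push Not at hc
    nlinarith
  nlinarith

lemma s8_ineq {n : ℕ} {Ω : Set (Eu n)} {q p c C1 A B S : ℝ} {u : Eu n → ℝ} (hq : 2 ≤ q) (hqp : q ≤ p)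
    (hc : 0 < c) (hc1 : c ≤ 1) (hcD : c ≤ s8D Ω q u) (hDC : s8D Ω q u ≤ C1) (hA : 0 ≤ A)
    (hB : 0 ≤ B) (hS : 0 ≤ S)
    (h : S * (A * s8D Ω q u) ^ (1 / p) ≤ (∫ x in Ω, ‖gradient u x‖ ^ 2) + B) :
    S * (A ^ (1 / p) * C1 ^ (1 / p - 1 / q)) ≤ enRatio Ω q u + B / c := by
  set D := s8D Ω q u with hD
  have hD0 : 0 < D := hc.trans_le hcD
  have hP : 0 < D ^ (1 / q) := by positivity
  have hcP : c ≤ D ^ (1 / q) := by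
    have h1 : c ^ (1 : ℝ) ≤ c ^ (1 / q) :=
      Real.rpow_le_rpow_of_exponent_ge hc hc1 ((div_le_one (by linarith)).2 (by linarith))
    rw [Real.rpow_one] at h1
    exact h1.trans (Real.rpow_le_rpow hc.le hcD (by positivity))
  have e1 : enRatio Ω q u = (∫ x in Ω, ‖gradient u x‖ ^ 2) / D ^ (1 / q) := rfl
  have h2 : C1 ^ (1 / p - 1 / q) ≤ D ^ (1 / p - 1 / q) :=
    Real.rpow_le_rpow_of_nonpos hD0 hDC
      (sub_nonpos.2 (one_div_le_one_div_of_le (by linarith) hqp))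
  have h3 : D ^ (1 / p - 1 / q) = D ^ (1 / p) / D ^ (1 / q) := Real.rpow_sub hD0 _ _
  rw [Real.mul_rpow hA hD0.le] at h
  calc S * (A ^ (1 / p) * C1 ^ (1 / p - 1 / q))
      ≤ S * (A ^ (1 / p) * (D ^ (1 / p) / D ^ (1 / q))) := by rw [← h3]; gcongr
    _ = S * (A ^ (1 / p) * D ^ (1 / p)) / D ^ (1 / q) := by ring
    _ ≤ ((∫ x in Ω, ‖gradient u x‖ ^ 2) + B) / D ^ (1 / q) := by gcongr
    _ = enRatio Ω q u + B / D ^ (1 / q) := by rw [e1, add_div]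
    _ ≤ _ := by gcongr

lemma s8_ratio_low {n : ℕ} {Ω : Set (Eu n)} {q c : ℝ} {u : Eu n → ℝ} (hq : 2 ≤ q)
    (hc : 0 < c) (hc1 : c ≤ 1) (hcD : c ≤ s8D Ω q u)
    (h : s8D Ω q u ≤ ∫ x in Ω, ‖gradient u x‖ ^ 2) : c ≤ enRatio Ω q u := by
  set D := s8D Ω q u with hD
  have hD0 : 0 < D := hc.trans_le hcD
  have e1 : enRatio Ω q u = (∫ x in Ω, ‖gradient u x‖ ^ 2) / D ^ (1 / q) := rfl
  have hq1 : 1 / q ≤ 1 := (div_le_one (by linarith)).2 (by linarith)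
  have hq0 : 0 ≤ 1 / q := by positivity
  rw [e1]
  calc c = c ^ (1 : ℝ) := (Real.rpow_one c).symm
    _ ≤ c ^ (1 - 1 / q) := Real.rpow_le_rpow_of_exponent_ge hc hc1 (by linarith)
    _ ≤ D ^ (1 - 1 / q) := Real.rpow_le_rpow hc.le hcD (by linarith)
    _ = D / D ^ (1 / q) := by rw [Real.rpow_sub hD0, Real.rpow_one]
    _ ≤ _ := by gcongr

lemma s8_lim {p t M C1 : ℝ} (hp : 2 < p) (ht : 0 < t) (hM : 1 ≤ M) (hC1 : 0 < C1) :
    Tendsto (fun ε : ℝ => ((t ^ (p - (p - ε)) * (1 + t / M) ^ (p - ε)) ^ 2) ^ (1 / p)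
      * C1 ^ (1 / p - 1 / (p - ε))) (𝓝[>] 0) (𝓝 ((1 + t / M) ^ 2)) := by
  have hb : 0 < 1 + t / M := by positivity
  have hcont : ContinuousAt (fun ε : ℝ => ((t ^ (p - (p - ε)) * (1 + t / M) ^ (p - ε)) ^ 2) ^ (1 / p)
      * C1 ^ (1 / p - 1 / (p - ε))) 0 := by
    have c1 : ContinuousAt (fun ε : ℝ => p - ε) 0 := by fun_prop
    have c2 : ContinuousAt (fun ε : ℝ => t ^ (p - (p - ε))) 0 :=
      continuousAt_const.rpow (continuousAt_const.sub c1) (Or.inl ht.ne')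
    have c3 : ContinuousAt (fun ε : ℝ => (1 + t / M) ^ (p - ε)) 0 :=
      continuousAt_const.rpow c1 (Or.inl hb.ne')
    have c4 : ContinuousAt (fun ε : ℝ => C1 ^ (1 / p - 1 / (p - ε))) 0 :=
      continuousAt_const.rpow (continuousAt_const.sub
        (continuousAt_const.div c1 (by linarith))) (Or.inl hC1.ne')
    exact (((c2.mul c3).pow 2).rpow_const (Or.inr (by positivity))).mul c4
  have h := hcont.tendsto.mono_left (nhdsWithin_le_nhds (s := Set.Ioi 0))
  have e : ((t ^ (p - (p - 0)) * (1 + t / M) ^ (p - 0)) ^ 2) ^ (1 / p)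
      * C1 ^ (1 / p - 1 / (p - 0)) = (1 + t / M) ^ 2 := by
    rw [sub_zero, sub_self, Real.rpow_zero, sub_self, Real.rpow_zero, one_mul, mul_one,
      ← Real.rpow_natCast, ← Real.rpow_mul hb.le, ← Real.rpow_mul hb.le, ← Real.rpow_natCast]
    congr 1
    field_simp
  rwa [e] at h

lemma s8_bound {n : ℕ} {Ω : Set (Eu n)} (hΩb : IsBounded Ω) {u : Eu n → ℝ} (hc : Continuous u)
    {x : Eu n} (hx : x ∈ Ω) : u x ≤ supN Ω u := by
  have hb : BddAbove ((fun x => |u x|) '' closure Ω) :=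
    (hΩb.isCompact_closure.image hc.abs).bddAbove
  exact (le_abs_self _).trans (le_csSup hb ⟨x, subset_closure hx, rfl⟩)

/-- the least energy solutions become unbounded: `λ_ε → ∞` as `ε → 0`. -/
theorem statement_8 {n : ℕ} (hn : n = 3 ∨ n = 4 ∨ n = 5)
    (Ω : Set (Eu n)) (hΩo : IsOpen Ω) (hΩb : IsBounded Ω) (hΩne : Ω.Nonempty)
    (ε₀ : ℝ) (hε₀ : 0 < ε₀) (u : ℝ → Eu n → ℝ)
    (hfam : LeastEnergyFamily Ω ε₀ u)
    (lam : ℝ → ℝ)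
    (hlam : ∀ ε ∈ Set.Ioo (0:ℝ) ε₀, 0 < lam ε ∧
      lam ε ^ (2 * ((n:ℝ) - 2) / (4 - ((n:ℝ) - 2) * ε)) = supN Ω (u ε)) :
    Tendsto lam (𝓝[>] (0:ℝ)) atTop := by
  have hn3 : 3 ≤ n := by omega
  have hn3' : (3 : ℝ) ≤ n := by exact_mod_cast hn3
  have hn5' : (n : ℝ) ≤ 5 := by
    have : n ≤ 5 := by omega
    exact_mod_cast this
  have hp : 7 / 3 ≤ pcrit n := by
    unfold pcrit
    rw [le_div_iff₀ (by linarith)]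
    linarith
  by_contra hcon
  rw [Filter.tendsto_atTop] at hcon
  push Not at hcon
  obtain ⟨L, hL⟩ := hcon
  obtain ⟨R0, hR0⟩ := hΩb.subset_ball 0
  set R : ℝ := max R0 1 with hR
  have hR1 : 1 ≤ R := le_max_right _ _
  have hΩR : Ω ⊆ ball 0 R := hR0.trans (ball_subset_ball (le_max_left _ _))
  set L' : ℝ := max L 1 with hL'
  have hL1 : 1 ≤ L' := le_max_right _ _
  set M : ℝ := L' ^ ((n : ℝ) - 2) with hM
  have hM1 : 1 ≤ M := Real.one_le_rpow hL1 (by linarith)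
  set p := pcrit n with hpdef
  have hfr : ∃ᶠ ε in 𝓝[>] (0 : ℝ), S8Sol Ω R M p (p - ε) (u ε) := by
    have hev : ∀ᶠ ε in 𝓝[>] (0 : ℝ), ε ∈ Set.Ioo 0 (min ε₀ (1 / 3)) :=
      Ioo_mem_nhdsGT (by positivity)
    refine (hL.and_eventually hev).mono ?_
    rintro ε ⟨hlt, hε0, hε1⟩
    have hε2 : ε < ε₀ := hε1.trans_le (min_le_left _ _)
    have hε3 : ε < 1 / 3 := hε1.trans_le (min_le_right _ _)
    obtain ⟨s1, s2, s3, s4, s5⟩ := hfam.1 ε ⟨hε0, hε2⟩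
    obtain ⟨l1, l2⟩ := hlam ε ⟨hε0, hε2⟩
    have hcont := s8_cont hΩo s2 s5
    have hsup : supN Ω (u ε) ≤ M := by
      rw [← l2]
      have hden : 3 ≤ 4 - ((n : ℝ) - 2) * ε := by nlinarith
      refine s8_pw_le hL1 l1.le (hlt.le.trans (le_max_left _ _)) ?_ ?_
      · exact div_nonneg (by linarith) (by linarith)
      · rw [div_le_iff₀ (by linarith)]
        nlinarith
    refine ⟨hΩo, hΩne, hΩR, s1, hcont, s5, s4,
      fun x hx => (s8_bound hΩb hcont hx).trans hsup, ?_, by linarith, by linarith, hM1, hR1⟩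
    intro x hx
    rw [s3 x hx, abs_of_pos (s4 x hx)]
    have e1 : rz Ω (fun z => u ε z ^ (p - ε)) x = rz Ω (fun z => |u ε z| ^ (p - ε)) x := by
      unfold rz rzk
      refine setIntegral_congr_fun hΩo.measurableSet fun z hz => ?_
      simp only [abs_of_pos (s4 z hz)]
    rw [e1]
    congr 2
    ring
  obtain ⟨c, hc0, hc1, hcD⟩ := s8_D_lower (n := n) hn3 (p := p) hR1 hM1
  obtain ⟨C, hC0, hkey⟩ := s8_key (n := n) hn3 hR1
  set C1 : ℝ := max 1 (M ^ p * s8kap n (2 * R) * M ^ p * volume.real Ω) with hC1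
  have hC10 : 0 < C1 := lt_of_lt_of_le one_pos (le_max_left _ _)
  have hSc : c ≤ CHLS n := by
    refine ge_of_tendsto_of_frequently hfam.2 (hfr.mono fun ε H => ?_)
    exact s8_ratio_low H.q2 hc0 hc1 (hcD _ _ _ H) (s8_D_energy hn3 H).2
  refine s8_alg (S := CHLS n) (M := M) (K := C / c) (hc0.trans_le hSc) hM1 (by positivity) ?_
  intro t ht
  have hlim1 := (s8_lim (p := p) (by linarith) ht hM1 hC10).const_mul (CHLS n)
  have hlim2 := hfam.2.add_const (C * t ^ 2 / c)
  have := le_of_tendsto_of_tendsto_of_frequently hlim1 hlim2 (hfr.mono fun ε H => ?_)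
  · calc _ ≤ _ := this
      _ = _ := by ring
  · have hD := hcD _ _ _ H
    exact s8_ineq H.q2 H.qp hc0 hc1 hD ((s8_D_upper hn3 H).trans (le_max_right _ _))
      (by positivity) (by positivity) (s8_CHLS_nonneg n)
      (hkey _ _ _ _ H (hc0.trans_le hD) t ht)
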